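/- Fix an integer n ≥ 4. Let g : ℝ^{n−1}×ℝ^{n−1} → ℝ be g(x, y) = x₁ − y₁ + (x_{n−1}+y_{n−1})²(x_{n−1}−y_{n−1})/4, and let M = {(x, y) : g(x, y) = 0 and x_i = y_i for 2 ≤ i ≤ n−2}. Define the twisted conormal bundle N*M' = {((x, ξ), (y, η)) : (x, y) ∈ M and there exist λ, μ₂, …, μ_{n−2} ∈ ℝ with ξ = λ∇_x g(x, y) + Σ_{i=2}^{n−2} μ_i e_i and −η = λ∇_y g(x, y) − Σ_{i=2}^{n−2} μ_i e_i}. Then N*M' equals the set C̃₀ of all ((x, ξ), (y, η)) with x_i = y_i for 2 ≤ i ≤ n−2, ξ_i = η_i for 1 ≤ i ≤ n−2, ξ_{n−1} = (x_{n−1}+y_{n−1})(3x_{n−1}−y_{n−1})ξ₁/4, η_{n−1} = (x_{n−1}+y_{n−1})(3y_{n−1}−x_{n−1})ξ₁/4, and g(x, y) = 0. -/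

import Mathlib

/-- The defining function
`g(x, y) = x₁ - y₁ + (x_{n-1}+y_{n-1})²(x_{n-1}-y_{n-1})/4` on `ℝ^{n-1} × ℝ^{n-1}`
(indices shifted down by one: `x₁ = x 0`, `x_{n-1} = x ⟨n-2⟩`). -/
noncomputable def gdef (n : ℕ) (hn : 4 ≤ n)
    (q : (Fin (n - 1) → ℝ) × (Fin (n - 1) → ℝ)) : ℝ :=
  q.1 ⟨0, by omega⟩ - q.2 ⟨0, by omega⟩ +
    (q.1 ⟨n - 2, by omega⟩ + q.2 ⟨n - 2, by omega⟩) ^ 2 *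
      (q.1 ⟨n - 2, by omega⟩ - q.2 ⟨n - 2, by omega⟩) / 4

/-- The gradient `∇_x g` of `g` in the `x` variables. -/
noncomputable def gradx (n : ℕ) (hn : 4 ≤ n)
    (q : (Fin (n - 1) → ℝ) × (Fin (n - 1) → ℝ)) : Fin (n - 1) → ℝ :=
  fun i => fderiv ℝ (gdef n hn) q (Pi.single i 1, 0)

/-- The gradient `∇_y g` of `g` in the `y` variables. -/
noncomputable def grady (n : ℕ) (hn : 4 ≤ n)
    (q : (Fin (n - 1) → ℝ) × (Fin (n - 1) → ℝ)) : Fin (n - 1) → ℝ :=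
  fun i => fderiv ℝ (gdef n hn) q (0, Pi.single i 1)

/-- The differential of `gdef` in closed form. -/
theorem fderiv_gdef_apply (n : ℕ) (hn : 4 ≤ n) (q v : (Fin (n - 1) → ℝ) × (Fin (n - 1) → ℝ)) :
    fderiv ℝ (gdef n hn) q v =
      v.1 ⟨0, by omega⟩ - v.2 ⟨0, by omega⟩ +
        (q.1 ⟨n - 2, by omega⟩ + q.2 ⟨n - 2, by omega⟩) *
          ((3 * q.1 ⟨n - 2, by omega⟩ - q.2 ⟨n - 2, by omega⟩) * v.1 ⟨n - 2, by omega⟩ +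
            (q.1 ⟨n - 2, by omega⟩ - 3 * q.2 ⟨n - 2, by omega⟩) * v.2 ⟨n - 2, by omega⟩) / 4 := by
  have hx (i : Fin (n - 1)) : HasFDerivAt
      (fun p : (Fin (n - 1) → ℝ) × (Fin (n - 1) → ℝ) => p.1 i)
      ((ContinuousLinearMap.proj i).comp (ContinuousLinearMap.fst ℝ _ _)) q :=
    ((ContinuousLinearMap.proj (R := ℝ) (φ := fun _ : Fin (n - 1) => ℝ) i).comp
      (ContinuousLinearMap.fst ℝ _ (Fin (n - 1) → ℝ))).hasFDerivAt
  have hy (i : Fin (n - 1)) : HasFDerivAt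
      (fun p : (Fin (n - 1) → ℝ) × (Fin (n - 1) → ℝ) => p.2 i)
      ((ContinuousLinearMap.proj i).comp (ContinuousLinearMap.snd ℝ _ _)) q :=
    ((ContinuousLinearMap.proj (R := ℝ) (φ := fun _ : Fin (n - 1) => ℝ) i).comp
      (ContinuousLinearMap.snd ℝ (Fin (n - 1) → ℝ) _)).hasFDerivAt
  have h : HasFDerivAt (gdef n hn) _ q :=
    ((hx ⟨0, by omega⟩).sub (hy ⟨0, by omega⟩)).add
      (((((hx ⟨n - 2, by omega⟩).add (hy ⟨n - 2, by omega⟩)).pow 2).mul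
        ((hx ⟨n - 2, by omega⟩).sub (hy ⟨n - 2, by omega⟩))).mul_const (4⁻¹ : ℝ))
  rw [h.fderiv]
  simp
  ring

theorem gradx_apply (n : ℕ) (hn : 4 ≤ n) (x y : Fin (n - 1) → ℝ) (j : Fin (n - 1)) :
    gradx n hn (x, y) j =
      if (j : ℕ) = 0 then 1 else if (j : ℕ) = n - 2 then
        (x ⟨n - 2, by omega⟩ + y ⟨n - 2, by omega⟩) *
          (3 * x ⟨n - 2, by omega⟩ - y ⟨n - 2, by omega⟩) / 4 else 0 := by
  rw [gradx, fderiv_gdef_apply]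
  simp only [Pi.single_apply, Fin.ext_iff, Pi.zero_apply]
  split_ifs <;> first | omega | ring

theorem grady_apply (n : ℕ) (hn : 4 ≤ n) (x y : Fin (n - 1) → ℝ) (j : Fin (n - 1)) :
    grady n hn (x, y) j =
      if (j : ℕ) = 0 then -1 else if (j : ℕ) = n - 2 then
        (x ⟨n - 2, by omega⟩ + y ⟨n - 2, by omega⟩) *
          (x ⟨n - 2, by omega⟩ - 3 * y ⟨n - 2, by omega⟩) / 4 else 0 := by
  rw [grady, fderiv_gdef_apply]
  simp only [Pi.single_apply, Fin.ext_iff, Pi.zero_apply]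
  split_ifs <;> first | omega | ring

theorem sum_smul_single_succ_apply (n : ℕ) (μ : Fin (n - 3) → ℝ) (j : Fin (n - 1)) :
    (∑ i : Fin (n - 3), μ i •
      (Pi.single (⟨(i : ℕ) + 1, by have := i.isLt; omega⟩ : Fin (n - 1)) 1 :
        Fin (n - 1) → ℝ)) j =
      if h : 1 ≤ (j : ℕ) ∧ (j : ℕ) ≤ n - 3 then μ ⟨(j : ℕ) - 1, by omega⟩ else 0 := by
  simp only [Finset.sum_apply, Pi.smul_apply, Pi.single_apply, smul_eq_mul, mul_ite, mul_one,
    mul_zero, Fin.ext_iff]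
  split_ifs with h
  · rw [Finset.sum_eq_single ⟨(j : ℕ) - 1, by omega⟩]
    · rw [if_pos (by simp only; omega)]
    · intro i _ hi
      rw [if_neg]
      intro hj
      exact hi (Fin.ext (by simp only; omega))
    · simp
  · refine Finset.sum_eq_zero fun i _ => if_neg ?_
    have := i.isLt
    omega

/-- the twisted conormal bundle `N*M'` of
`M = {g = 0, x_i = y_i (2 ≤ i ≤ n-2)}`, where the fiber covectors are
`ξ = λ∇_x g + Σ μ_i e_i` and `-η = λ∇_y g - Σ μ_i e_i` (the sums running over
`2 ≤ i ≤ n-2`, i.e. over the shifted indices `1, …, n-3`), equals the set `C̃₀` of all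
`((x, ξ), (y, η))` with `x_i = y_i (2 ≤ i ≤ n-2)`, `ξ_i = η_i (1 ≤ i ≤ n-2)`,
`ξ_{n-1} = (x_{n-1}+y_{n-1})(3x_{n-1}-y_{n-1})ξ₁/4`,
`η_{n-1} = (x_{n-1}+y_{n-1})(3y_{n-1}-x_{n-1})ξ₁/4`, and `g(x, y) = 0`. -/
theorem stmt_18 (n : ℕ) (hn : 4 ≤ n) :
    {w : ((Fin (n - 1) → ℝ) × (Fin (n - 1) → ℝ)) ×
        ((Fin (n - 1) → ℝ) × (Fin (n - 1) → ℝ)) |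
      (gdef n hn (w.1.1, w.2.1) = 0 ∧
        (∀ i : ℕ, ∀ h1 : 1 ≤ i, ∀ h2 : i ≤ n - 3,
          w.1.1 ⟨i, by omega⟩ = w.2.1 ⟨i, by omega⟩)) ∧
      ∃ lam : ℝ, ∃ μ : Fin (n - 3) → ℝ,
        w.1.2 = lam • gradx n hn (w.1.1, w.2.1) +
            ∑ i : Fin (n - 3), μ i •
              (Pi.single (⟨(i : ℕ) + 1, by have := i.isLt; omega⟩ : Fin (n - 1)) 1 :
                Fin (n - 1) → ℝ) ∧
        -w.2.2 = lam • grady n hn (w.1.1, w.2.1) -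
            ∑ i : Fin (n - 3), μ i •
              (Pi.single (⟨(i : ℕ) + 1, by have := i.isLt; omega⟩ : Fin (n - 1)) 1 :
                Fin (n - 1) → ℝ)} =
    {w | (∀ i : ℕ, ∀ h1 : 1 ≤ i, ∀ h2 : i ≤ n - 3,
          w.1.1 ⟨i, by omega⟩ = w.2.1 ⟨i, by omega⟩) ∧
      (∀ i : Fin (n - 2), w.1.2 ⟨(i : ℕ), by have := i.isLt; omega⟩ =
          w.2.2 ⟨(i : ℕ), by have := i.isLt; omega⟩) ∧
      w.1.2 ⟨n - 2, by omega⟩ =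
        (w.1.1 ⟨n - 2, by omega⟩ + w.2.1 ⟨n - 2, by omega⟩) *
          (3 * w.1.1 ⟨n - 2, by omega⟩ - w.2.1 ⟨n - 2, by omega⟩) *
            w.1.2 ⟨0, by omega⟩ / 4 ∧
      w.2.2 ⟨n - 2, by omega⟩ =
        (w.1.1 ⟨n - 2, by omega⟩ + w.2.1 ⟨n - 2, by omega⟩) *
          (3 * w.2.1 ⟨n - 2, by omega⟩ - w.1.1 ⟨n - 2, by omega⟩) *
            w.1.2 ⟨0, by omega⟩ / 4 ∧
      gdef n hn (w.1.1, w.2.1) = 0} := by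
  ext ⟨⟨x, ξ⟩, ⟨y, η⟩⟩
  simp only [Set.mem_ofPred_eq, funext_iff, Pi.add_apply, Pi.sub_apply, Pi.neg_apply,
    sum_smul_single_succ_apply, Pi.smul_apply, smul_eq_mul, gradx_apply, grady_apply]
  constructor
  · rintro ⟨⟨hg, hM⟩, lam, μ, hξ, hη⟩
    have hξ₀ : ξ ⟨0, by omega⟩ = lam := by simpa using hξ ⟨0, by omega⟩
    have hξl := hξ ⟨n - 2, by omega⟩
    have hηl := hη ⟨n - 2, by omega⟩
    simp only [show ¬ n - 2 = 0 by omega, show ¬ (1 ≤ n - 2 ∧ n - 2 ≤ n - 3) by omega,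
      if_true, if_false, dite_false] at hξl hηl
    refine ⟨hM, fun i => ?_, ?_, ?_, hg⟩
    · have hi := i.isLt
      have h₁ := hξ ⟨i, by omega⟩
      have h₂ := hη ⟨i, by omega⟩
      simp only [show ¬ (i : ℕ) = n - 2 by omega, if_false] at h₁ h₂
      split_ifs at h₁ h₂ <;> first | omega | linarith
    · rw [hξl, hξ₀]
      ring
    · rw [hξ₀]
      linear_combination -hηl
  · have h₀ : 0 < n - 1 := by omega
    have hl : n - 2 < n - 1 := by omega
    have hcases (j : Fin (n - 1)) :
        j = ⟨0, h₀⟩ ∨ j = ⟨n - 2, hl⟩ ∨ (1 ≤ (j : ℕ) ∧ (j : ℕ) ≤ n - 3) := by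
      simp only [Fin.ext_iff]
      omega
    rintro ⟨hM, hmid, hξl, hηl, hg⟩
    refine ⟨⟨hg, hM⟩, ξ ⟨0, by omega⟩, fun i => ξ ⟨(i : ℕ) + 1, by omega⟩, ?_, ?_⟩
    · intro j
      rcases hcases j with rfl | rfl | h
      · simp
      · rw [if_neg (by simp only; omega), if_pos rfl, dif_neg (by simp only; omega), hξl]
        ring
      · rw [if_neg (by omega), if_neg (by omega), dif_pos h]
        simp [Nat.sub_add_cancel h.1]
    · intro j
      rcases hcases j with rfl | rfl | h
      · simpa using (hmid ⟨0, by omega⟩).symm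
      · rw [if_neg (by simp only; omega), if_pos rfl, dif_neg (by simp only; omega), hηl]
        ring
      · rw [if_neg (by omega), if_neg (by omega), dif_pos h]
        simpa [Nat.sub_add_cancel h.1] using (hmid ⟨j, by omega⟩).symm
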